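/- Let n ≥ 1 and let A, B ∈ Mod be nonisomorphic structures. If there exists a set C ∈ Σ⁰_{2n-1}(Mod) such that every S ∈ Mod with S ≅ A belongs to C and no S ∈ Mod with S ≅ B belongs to C, then the family {A, B} is =_ℕ^{n+}-learnable. -/

import Mathlib

/-!  Common definitions.

`Tower n` is the space ℕ^(ℕ^(n+1)) of the paper: `Tower 0 = ℕ → ℕ`,
`Tower (n+1) = ℕ → Tower n`, each with the product topology (ℕ discrete).
-/

def Tower : ℕ → Type
  | 0 => ℕ → ℕ
  | n + 1 => ℕ → Tower n

instance Tower.topologicalSpace : (n : ℕ) → TopologicalSpace (Tower n)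
  | 0 => inferInstanceAs (TopologicalSpace (ℕ → ℕ))
  | n + 1 => letI := Tower.topologicalSpace n
             inferInstanceAs (TopologicalSpace (ℕ → Tower n))

/-- The Friedman–Stanley jump `E⁺` of an equivalence relation `E` on `X`. -/
def FSJump {X : Type*} (E : X → X → Prop) (p q : ℕ → X) : Prop :=
  (∀ k, ∃ l, E (p k) (q l)) ∧ ∀ l, ∃ k, E (q l) (p k)

/-- The power `E^ω` of an equivalence relation `E` on `X`. -/
def RelPow {X : Type*} (E : X → X → Prop) (p q : ℕ → X) : Prop :=
  ∀ k, E (p k) (q k)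

/-- `eqNatPlus n` is the relation `=_ℕ^{(n+1)+}` on `Tower n = ℕ^(ℕ^(n+1))`. -/
def eqNatPlus : (n : ℕ) → Tower n → Tower n → Prop
  | 0 => FSJump (· = · : ℕ → ℕ → Prop)
  | n + 1 => FSJump (eqNatPlus n)

/-- `eqBairePlus n` is the relation `=_{ℕ^ℕ}^{(n+1)+}` on `Tower (n+1) = ℕ^(ℕ^(n+2))`. -/
def eqBairePlus : (n : ℕ) → Tower (n + 1) → Tower (n + 1) → Prop
  | 0 => FSJump (· = · : (ℕ → ℕ) → (ℕ → ℕ) → Prop)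
  | n + 1 => FSJump (eqBairePlus n)

/-- `FullRel m` on `Tower m = ℕ^(ℕ^(m+1))`: for `m = 2n` it is `(=_ℕ^+)^{n(ω+)}`,
for `m = 2n+1` it is `(=_{ℕ^ℕ}^+)^{n(ω+)}` (with `E^{0(ω+)} = E`,
`E^{(n+1)(ω+)} = ((E^{n(ω+)})^ω)^+`). -/
def FullRel : (m : ℕ) → Tower m → Tower m → Prop
  | 0 => FSJump (· = · : ℕ → ℕ → Prop)
  | 1 => FSJump (· = · : (ℕ → ℕ) → (ℕ → ℕ) → Prop)
  | m + 2 => FSJump (RelPow (FullRel m))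

/-- The pair of canonical elements `(F_{m+1}, I_{m+1})` of `Tower m = ℕ^(ℕ^(m+1))`. -/
def can : (m : ℕ) → Tower m × Tower m
  | 0 => (fun k => if k = 0 then 0 else 1, fun _ => 1)
  | 1 => (fun i k => if i = 0 then 0 else if k + 1 < i then 0 else 1,
          fun i k => if k < i then 0 else 1)
  | m + 2 =>
      (fun i k => if i = 0 then (can m).1 else if k + 1 < i then (can m).1 else (can m).2,
       fun i k => if k < i then (can m).1 else (can m).2)

/-- The canonical element `F_{m+1} ∈ ℕ^(ℕ^(m+1))`. -/
def canF (m : ℕ) : Tower m := (can m).1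

/-- The canonical element `I_{m+1} ∈ ℕ^(ℕ^(m+1))`. -/
def canI (m : ℕ) : Tower m := (can m).2

/-- `p ∈ Tower m = ℕ^(ℕ^(m+1))` is `full_{m+1}`. -/
def IsFull (m : ℕ) (p : Tower m) : Prop := FullRel m p (canF m)

/-- `p ∈ Tower m = ℕ^(ℕ^(m+1))` is `initial_{m+1}`. -/
def IsInitial (m : ℕ) (p : Tower m) : Prop := FullRel m p (canI m)

open Classical in
/-- The permission operator `∧₀`. -/
noncomputable def perm0 (p q : ℕ → ℕ) : ℕ → ℕ :=
  fun k => if ∀ j ≤ k, p j = q j then p k else 1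

/-- The permission operator `∧_{m+1}` on `Tower m = ℕ^(ℕ^(m+1))`
(with `⟨·,·⟩ = Nat.pair`). -/
noncomputable def perm : (m : ℕ) → Tower m → Tower m → Tower m
  | 0, p, q => fun x => max (p (Nat.unpair x).1) (q (Nat.unpair x).2)
  | 1, p, q => fun x => perm0 (p (Nat.unpair x).1) (q (Nat.unpair x).2)
  | m + 2, p, q => fun x k => perm m (p (Nat.unpair x).1 k) (q (Nat.unpair x).2 k)

/-- The operator `⊗_{m+1,i}` on `Tower m = ℕ^(ℕ^(m+1))` (with `⟨·,·⟩ = Nat.pair`). -/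
def otimes : (m : ℕ) → ℕ → Tower m → Tower m
  | 0, i, p => fun k => Nat.pair (p k) i
  | m + 1, i, p => fun k => otimes m i (p k)

/-- `E` continuously reduces to `F`. -/
def ContReduces {X Y : Type*} [TopologicalSpace X] [TopologicalSpace Y]
    (E : X → X → Prop) (F : Y → Y → Prop) : Prop :=
  ∃ f : X → Y, Continuous f ∧ ∀ x x', E x x' ↔ F (f x) (f x')

/-- `SigmaLevel X n` is the pointclass `Σ⁰_{n+1}(X)`: `Σ⁰_1` = open sets,
`Σ⁰_{n+1}` = countable unions of complements of `Σ⁰_n` sets. -/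
def SigmaLevel (X : Type*) [TopologicalSpace X] : ℕ → Set (Set X)
  | 0 => {C | IsOpen C}
  | n + 1 => {C | ∃ A : ℕ → Set X, (∀ i, A i ∈ SigmaLevel X n) ∧ C = ⋃ i, (A i)ᶜ}

/-- The space of `(ι, ar)`-structures with domain ℕ. -/
def Md (ι : Type) (ar : ι → ℕ) : Type := ∀ i : ι, (Fin (ar i) → ℕ) → Bool

instance (ι : Type) (ar : ι → ℕ) : TopologicalSpace (Md ι ar) :=
  inferInstanceAs (TopologicalSpace (∀ i : ι, (Fin (ar i) → ℕ) → Bool))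

/-- Isomorphism of structures with domain ℕ. -/
def Iso {ι : Type} {ar : ι → ℕ} (A B : Md ι ar) : Prop :=
  ∃ σ : ℕ → ℕ, Function.Bijective σ ∧ ∀ i v, A i v = B i (σ ∘ v)

/-- The learning domain of a family: the closure of `K` under isomorphism. -/
def LearnDom {ι : Type} {ar : ι → ℕ} (K : Set (Md ι ar)) : Set (Md ι ar) :=
  {S | ∃ A ∈ K, Iso S A}

/-- The family `K` is `E`-learnable. -/
def Learnable {ι : Type} {ar : ι → ℕ} {X : Type*} [TopologicalSpace X]
    (E : X → X → Prop) (K : Set (Md ι ar)) : Prop :=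
  ∃ Γ : LearnDom K → X, Continuous Γ ∧
    ∀ S S' : LearnDom K, (Iso S.1 S'.1 ↔ E (Γ S) (Γ S'))

/-- A countable family of pairwise nonisomorphic structures. -/
def GoodFamily {ι : Type} {ar : ι → ℕ} (K : Set (Md ι ar)) : Prop :=
  K.Countable ∧ ∀ A ∈ K, ∀ B ∈ K, A ≠ B → ¬ Iso A B

/-- `E` is learn-reducible to `F` (w.r.t. structures in `Md ι ar`). -/
def LearnRed (ι : Type) (ar : ι → ℕ) {X Y : Type*} [TopologicalSpace X]
    [TopologicalSpace Y] (E : X → X → Prop) (F : Y → Y → Prop) : Prop :=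
  ∀ K : Set (Md ι ar), GoodFamily K → Learnable E K → Learnable F K

/-- `E` is compact for learning (w.r.t. structures in `Md ι ar`). -/
def CompactForLearning (ι : Type) (ar : ι → ℕ) {X : Type*} [TopologicalSpace X]
    (E : X → X → Prop) : Prop :=
  ∀ K : Set (Md ι ar), GoodFamily K →
    (Learnable E K ↔ ∀ A ∈ K, ∀ B ∈ K, A ≠ B → Learnable E ({A, B} : Set (Md ι ar)))

def GoodTag {X : Type} [TopologicalSpace X] (E : X → X → Prop) : Prop :=
  Equivalence E ∧ ∃ tag : ℕ → X → X, (∀ k, Continuous (tag k)) ∧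
    ∀ k k' x y, E (tag k x) (tag k' y) ↔ k = k' ∧ E x y

def HasCode {X : Type} [TopologicalSpace X] (E : X → X → Prop) : Prop :=
  ∃ code : (ℕ → X) → X, Continuous code ∧ ∀ p q, E (code p) (code q) ↔ ∀ k, E (p k) (q k)

theorem FSJump_equiv {X : Type} {E : X → X → Prop} (h : Equivalence E) :
    Equivalence (FSJump E) := by
  refine ⟨fun p => ⟨fun k => ⟨k, h.refl _⟩, fun k => ⟨k, h.refl _⟩⟩, fun h => ⟨h.2, h.1⟩, ?_⟩
  intro p q r h1 h2
  refine ⟨fun k => ?_, fun k => ?_⟩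
  · obtain ⟨l, hl⟩ := h1.1 k
    obtain ⟨m, hm⟩ := h2.1 l
    exact ⟨m, h.trans hl hm⟩
  · obtain ⟨l, hl⟩ := h2.2 k
    obtain ⟨m, hm⟩ := h1.2 l
    exact ⟨m, h.trans hl hm⟩

theorem goodTag_nat : GoodTag (fun x y : ℕ => x = y) := by
  refine ⟨⟨fun _ => rfl, fun h => h.symm, fun h h' => h.trans h'⟩, fun k x => Nat.pair k x,
    fun k => continuous_of_discreteTopology, ?_⟩
  intro k k' x y
  exact Nat.pair_eq_pair

theorem goodTag_jump {X : Type} [TopologicalSpace X] {E : X → X → Prop} (h : GoodTag E) :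
    GoodTag (FSJump E) := by
  obtain ⟨he, tag, hc, ht⟩ := h
  refine ⟨FSJump_equiv he, fun k p m => tag k (p m), ?_, ?_⟩
  · intro k
    exact continuous_pi fun m => (hc k).comp (continuous_apply m)
  · intro k k' p q
    simp only [FSJump, ht]
    constructor
    · rintro ⟨h1, h2⟩
      exact ⟨(h1 0).choose_spec.1, fun a => ⟨(h1 a).choose, (h1 a).choose_spec.2⟩,
        fun a => ⟨(h2 a).choose, (h2 a).choose_spec.2⟩⟩
    · rintro ⟨rfl, h1, h2⟩
      simpa using ⟨h1, h2⟩

theorem code_jump {X : Type} [TopologicalSpace X] {E : X → X → Prop} (h : GoodTag E) :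
    HasCode (FSJump E) := by
  obtain ⟨he, tag, hc, ht⟩ := h
  refine ⟨fun p m => tag m.unpair.1 (p m.unpair.1 m.unpair.2), ?_, ?_⟩
  · refine continuous_pi fun m => (hc _).comp ?_
    exact (continuous_apply _).comp (continuous_apply _)
  · intro p q
    simp only [FSJump, ht]
    constructor
    · rintro ⟨h1, h2⟩ k
      refine ⟨fun l => ?_, fun l => ?_⟩
      · obtain ⟨m, e, hm⟩ := h1 (Nat.pair k l)
        simp only [Nat.unpair_pair] at e hm
        rw [← e] at hm
        exact ⟨_, hm⟩
      · obtain ⟨m, e, hm⟩ := h2 (Nat.pair k l)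
        simp only [Nat.unpair_pair] at e hm
        rw [← e] at hm
        exact ⟨_, hm⟩
    · intro h
      refine ⟨fun m => ?_, fun m => ?_⟩
      · obtain ⟨l, hl⟩ := (h m.unpair.1).1 m.unpair.2
        exact ⟨Nat.pair m.unpair.1 l, by simpa using hl⟩
      · obtain ⟨l, hl⟩ := (h m.unpair.1).2 m.unpair.2
        exact ⟨Nat.pair m.unpair.1 l, by simpa using hl⟩

def TwSep (Y : Type) [TopologicalSpace Y] {X : Type} [TopologicalSpace X] (E : X → X → Prop)
    (Cs : Set (Set Y)) : Prop :=
  ∃ a b, ¬ E a b ∧ ∀ C ∈ Cs, ∃ f : Y → X, Continuous f ∧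
    (∀ y ∈ C, E (f y) a) ∧ (∀ y, y ∉ C → E (f y) b)

theorem sep_step {Y : Type} [TopologicalSpace Y] {X : Type} [TopologicalSpace X]
    {E : X → X → Prop} (he : Equivalence E) (hcode : HasCode E) {Cs : Set (Set Y)}
    (hinter : ∀ C ∈ Cs, ∀ D ∈ Cs, C ∩ D ∈ Cs) (hs : TwSep Y E Cs) {Ds : Set (Set Y)}
    (hD : ∀ D ∈ Ds, ∃ B : ℕ → ℕ → Set Y, (∀ i j, B i j ∈ Cs) ∧ D = ⋃ i, ⋂ j, B i j) :
    TwSep Y (FSJump E) Ds := by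
  classical
  obtain ⟨a, b, hab, hf⟩ := hs
  obtain ⟨code, hcc, hce⟩ := hcode
  let s : ℕ → X := fun k => code fun j => if j < k then a else b
  let t : X := code fun _ => a
  have hst : ∀ k, ¬ E t (s k) := by
    intro k h
    have := (hce _ _).1 h k
    simp at this
    exact hab this
  refine ⟨fun m => if m = 0 then t else s (m - 1), s, ?_, ?_⟩
  · intro h
    obtain ⟨l, hl⟩ := h.1 0
    exact hst l (by simpa using hl)
  intro D hDD
  obtain ⟨B, hB, rfl⟩ := hD D hDD
  let B' : ℕ → ℕ → Set Y := fun i j => Nat.rec (B i 0) (fun j S => S ∩ B i (j + 1)) j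
  have hB' : ∀ i j, B' i j ∈ Cs := by
    intro i j
    induction j with
    | zero => exact hB i 0
    | succ j ih => exact hinter _ ih _ (hB i _)
  have hmem : ∀ i j y, y ∈ B' i j ↔ ∀ j' ≤ j, y ∈ B i j' := by
    intro i j y
    induction j with
    | zero => simp [B']
    | succ j ih =>
      change (y ∈ B' i j ∧ y ∈ B i (j + 1)) ↔ _
      rw [ih]
      constructor
      · rintro ⟨h1, h2⟩ j' hj
        rcases Nat.le_succ_iff.1 hj with h | h
        · exact h1 _ h
        · exact h ▸ h2
      · intro h
        exact ⟨fun j' hj => h _ (by omega), h _ le_rfl⟩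
  choose g hgc hg1 hg2 using fun i j => hf _ (hB' i j)
  have key1 : ∀ i y, (∀ j, y ∈ B i j) → E (code fun j => g i j y) t := by
    intro i y h
    rw [hce]
    intro k
    exact hg1 _ _ _ ((hmem _ _ _).2 fun j _ => h j)
  have key2 : ∀ i y, (¬ ∀ j, y ∈ B i j) → ∃ k, E (code fun j => g i j y) (s k) := by
    intro i y h
    push Not at h
    refine ⟨Nat.find h, ?_⟩
    rw [hce]
    intro k
    by_cases hk : k < Nat.find h
    · simp only [hk, if_true]
      refine hg1 _ _ _ ((hmem _ _ _).2 fun j hj => ?_)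
      by_contra hn
      have := Nat.find_min' h hn
      omega
    · simp only [hk, if_false]
      refine hg2 _ _ _ fun hn => Nat.find_spec h ((hmem _ _ _).1 hn _ (by omega))
  let f : Y → ℕ → X := fun y m => if m % 2 = 0 then code (fun j => g (m / 2) j y) else s (m / 2)
  have f0 : ∀ y i, f y (2 * i) = code (fun j => g i j y) := by
    intro y i; simp [f]
  have f1 : ∀ y i, f y (2 * i + 1) = s i := by
    intro y i
    have h1 : (2 * i + 1) % 2 = 1 := by omega
    have h2 : (2 * i + 1) / 2 = i := by omega
    simp [f, h1, h2]
  have hpar : ∀ m : ℕ, (∃ i, m = 2 * i) ∨ ∃ i, m = 2 * i + 1 := by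
    intro m
    rcases Nat.even_or_odd' m with ⟨i, h | h⟩
    · exact Or.inl ⟨i, h⟩
    · exact Or.inr ⟨i, h⟩
  refine ⟨f, ?_, ?_, ?_⟩
  · refine continuous_pi fun m => ?_
    rcases hpar m with ⟨i, rfl⟩ | ⟨i, rfl⟩
    · simp only [f0]
      exact hcc.comp (continuous_pi fun j => hgc i j)
    · simp only [f1]
      exact continuous_const
  · intro y hy
    simp only [Set.mem_iUnion, Set.mem_iInter] at hy
    obtain ⟨i0, hi0⟩ := hy
    refine ⟨fun m => ?_, fun m => ?_⟩
    · rcases hpar m with ⟨i, rfl⟩ | ⟨i, rfl⟩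
      · rw [f0]
        by_cases h : ∀ j, y ∈ B i j
        · exact ⟨0, by simpa using key1 i y h⟩
        · obtain ⟨k, hk⟩ := key2 i y h
          exact ⟨k + 1, by simpa using hk⟩
      · rw [f1]
        exact ⟨i + 1, by simpa using he.refl _⟩
    · rcases m with _ | k
      · exact ⟨2 * i0, by rw [f0]; simpa using he.symm (key1 i0 y hi0)⟩
      · exact ⟨2 * k + 1, by rw [f1]; simpa using he.refl _⟩
  · intro y hy
    simp only [Set.mem_iUnion, Set.mem_iInter, not_exists] at hy
    refine ⟨fun m => ?_, fun m => ?_⟩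
    · rcases hpar m with ⟨i, rfl⟩ | ⟨i, rfl⟩
      · rw [f0]
        exact key2 i y (hy i)
      · rw [f1]
        exact ⟨i, he.refl _⟩
    · exact ⟨2 * m + 1, by rw [f1]; exact he.refl _⟩

theorem sep_zero {Y : Type} [TopologicalSpace Y]
    (hY : ∀ U : Set Y, IsOpen U → ∃ V : ℕ → Set Y, (∀ i, IsClopen (V i)) ∧ U = ⋃ i, V i) :
    TwSep Y (FSJump (fun x y : ℕ => x = y)) {C : Set Y | IsOpen C} := by
  classical
  refine ⟨fun k => if k = 0 then 0 else 1, fun _ => 1, ?_, ?_⟩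
  · intro h
    simpa using h.1 0
  intro C hC
  obtain ⟨V, hV, rfl⟩ := hY C hC
  refine ⟨fun y m => if m = 0 then 1 else if y ∈ V (m - 1) then 0 else 1, ?_, ?_, ?_⟩
  · refine continuous_pi fun m => ?_
    by_cases hm : m = 0
    · simp only [hm, if_true]; exact continuous_const
    · simp only [hm, if_false]
      refine continuous_if ?_ continuous_const.continuousOn continuous_const.continuousOn
      intro y hy
      rw [Set.setOf_mem_eq, (hV _).frontier_eq] at hy
      exact hy.elim
  · intro y hy
    obtain ⟨i, hi⟩ := Set.mem_iUnion.1 hy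
    refine ⟨fun m => ?_, fun m => ?_⟩
    · beta_reduce
      split_ifs
      · exact ⟨1, by simp⟩
      · exact ⟨0, by simp⟩
      · exact ⟨1, by simp⟩
    · beta_reduce
      split_ifs
      · exact ⟨i + 1, by simp [hi]⟩
      · exact ⟨0, by simp⟩
  · intro y hy
    simp only [Set.mem_iUnion, not_exists] at hy
    exact ⟨fun m => ⟨0, by simp [hy]⟩, fun m => ⟨0, by simp⟩⟩

theorem sigma_two {Y : Type} [TopologicalSpace Y] {n : ℕ} {C : Set Y} :
    C ∈ SigmaLevel Y (n + 2) ↔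
      ∃ B : ℕ → ℕ → Set Y, (∀ i j, B i j ∈ SigmaLevel Y n) ∧ C = ⋃ i, ⋂ j, B i j := by
  constructor
  · rintro ⟨A, hA, rfl⟩
    choose B hB hAB using hA
    exact ⟨B, hB, by simp [hAB]⟩
  · rintro ⟨B, hB, rfl⟩
    exact ⟨fun i => ⋃ j, (B i j)ᶜ, fun i => ⟨B i, hB i, rfl⟩, by simp⟩

theorem sigma_inter {Y : Type} [TopologicalSpace Y] (n : ℕ) :
    ∀ C ∈ SigmaLevel Y (2 * n), ∀ D ∈ SigmaLevel Y (2 * n), C ∩ D ∈ SigmaLevel Y (2 * n) := by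
  induction n with
  | zero => intro C hC D hD; exact IsOpen.inter hC hD
  | succ n ih =>
    intro C hC D hD
    rw [show 2 * (n + 1) = 2 * n + 2 by ring] at *
    obtain ⟨B, hB, rfl⟩ := sigma_two.1 hC
    obtain ⟨B', hB', rfl⟩ := sigma_two.1 hD
    refine sigma_two.2 ⟨fun m j => B m.unpair.1 j ∩ B' m.unpair.2 j,
      fun m j => ih _ (hB _ _) _ (hB' _ _), ?_⟩
    ext y
    simp only [Set.mem_inter_iff, Set.mem_iUnion, Set.mem_iInter]
    constructor
    · rintro ⟨⟨i, hi⟩, ⟨k, hk⟩⟩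
      exact ⟨Nat.pair i k, fun j => by simpa using ⟨hi j, hk j⟩⟩
    · rintro ⟨m, hm⟩
      exact ⟨⟨_, fun j => (hm j).1⟩, ⟨_, fun j => (hm j).2⟩⟩

theorem tower_good (n : ℕ) : GoodTag (eqNatPlus n) := by
  induction n with
  | zero => exact goodTag_jump goodTag_nat
  | succ n ih => exact goodTag_jump ih

theorem tower_code (n : ℕ) : HasCode (eqNatPlus n) := by
  cases n with
  | zero => exact code_jump goodTag_nat
  | succ n => exact code_jump (tower_good n)

theorem tower_sep {Y : Type} [TopologicalSpace Y]
    (hY : ∀ U : Set Y, IsOpen U → ∃ V : ℕ → Set Y, (∀ i, IsClopen (V i)) ∧ U = ⋃ i, V i)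
    (n : ℕ) : TwSep Y (eqNatPlus n) (SigmaLevel Y (2 * n)) := by
  induction n with
  | zero => exact sep_zero hY
  | succ n ih =>
    exact sep_step (tower_good n).1 (tower_code n) (sigma_inter n) ih
      (fun D hD => sigma_two.1 hD)

theorem clopen_union {Y : Type} [TopologicalSpace Y] [CompactSpace Y] [T2Space Y]
    [TotallyDisconnectedSpace Y] [SecondCountableTopology Y] (U : Set Y) (hU : IsOpen U) :
    ∃ V : ℕ → Set Y, (∀ i, IsClopen (V i)) ∧ U = ⋃ i, V i := by
  have hb := loc_compact_Haus_tot_disc_of_zero_dim (H := Y)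
  obtain ⟨T, hT, hTc, hTu⟩ := TopologicalSpace.isOpen_sUnion_countable
    {s : Set Y | IsClopen s ∧ s ⊆ U} (fun s hs => hs.1.isOpen)
  obtain ⟨V, hV⟩ := (hT.insert ∅).exists_eq_range (Set.insert_nonempty _ _)
  refine ⟨V, fun i => ?_, ?_⟩
  · have : V i ∈ insert ∅ T := hV ▸ Set.mem_range_self i
    rcases this with h | h
    · rw [h]; exact isClopen_empty
    · exact (hTc h).1
  · rw [← Set.sUnion_range, ← hV, Set.sUnion_insert, Set.empty_union, hTu]
    ext y
    constructor
    · intro hy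
      obtain ⟨s, hs, hys, hsU⟩ := hb.exists_subset_of_mem_open hy hU
      exact ⟨s, ⟨hs, hsU⟩, hys⟩
    · rintro ⟨s, hs, hys⟩
      exact hs.2 hys

theorem Iso.symm' {ι : Type} {ar : ι → ℕ} {A B : Md ι ar} (h : Iso A B) : Iso B A := by
  obtain ⟨σ, hσ, h⟩ := h
  let e := Equiv.ofBijective σ hσ
  refine ⟨e.symm, e.symm.bijective, fun i v => ?_⟩
  rw [h]
  congr 1
  ext k
  exact (e.apply_symm_apply (v k)).symm

theorem Iso.trans' {ι : Type} {ar : ι → ℕ} {A B C : Md ι ar} (h : Iso A B) (h' : Iso B C) :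
    Iso A C := by
  obtain ⟨σ, hσ, h⟩ := h
  obtain ⟨τ, hτ, h'⟩ := h'
  exact ⟨τ ∘ σ, hτ.comp hσ, fun i v => by rw [h, h']; rfl⟩

theorem md_clopen {ι : Type} [Countable ι] (ar : ι → ℕ) (U : Set (Md ι ar)) (hU : IsOpen U) :
    ∃ V : ℕ → Set (Md ι ar), (∀ i, IsClopen (V i)) ∧ U = ⋃ i, V i :=
  clopen_union (Y := ∀ i : ι, (Fin (ar i) → ℕ) → Bool) U hU

/-- for `n ≥ 1` (here via the shift: `eqNatPlus n = =_ℕ^{(n+1)+}` and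
`SigmaLevel (Md ι ar) (2*n) = Σ⁰_{2n+1} = Σ⁰_{2(n+1)-1}`): if `A ≇ B` and some
`Σ⁰_{2(n+1)-1}` set `C` contains every copy of `A` and no copy of `B`, then
`{A, B}` is `=_ℕ^{(n+1)+}`-learnable. -/
theorem stmt_10 {ι : Type} [Countable ι] (ar : ι → ℕ) (n : ℕ)
    (A B : Md ι ar) (hAB : ¬ Iso A B)
    (C : Set (Md ι ar)) (hC : C ∈ SigmaLevel (Md ι ar) (2 * n))
    (hA : ∀ S, Iso S A → S ∈ C) (hB : ∀ S, Iso S B → S ∉ C) :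
    Learnable (eqNatPlus n) ({A, B} : Set (Md ι ar)) := by
  obtain ⟨a, b, hab, hf⟩ := tower_sep (md_clopen ar) n
  obtain ⟨f, hfc, h1, h2⟩ := hf C hC
  have he := (tower_good n).1
  refine ⟨fun S => f S.1, hfc.comp continuous_subtype_val, ?_⟩
  have cases : ∀ S : LearnDom ({A, B} : Set (Md ι ar)),
      (Iso S.1 A ∧ eqNatPlus n (f S.1) a) ∨ (Iso S.1 B ∧ eqNatPlus n (f S.1) b) := by
    rintro ⟨S, T, hT, hS⟩
    rcases hT with rfl | hT
    · exact Or.inl ⟨hS, h1 _ (hA _ hS)⟩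
    · rw [Set.mem_singleton_iff] at hT
      subst hT
      exact Or.inr ⟨hS, h2 _ (hB _ hS)⟩
  intro S S'
  rcases cases S with ⟨hS, hs⟩ | ⟨hS, hs⟩ <;> rcases cases S' with ⟨hS', hs'⟩ | ⟨hS', hs'⟩
  · exact iff_of_true (hS.trans' hS'.symm') (he.trans hs (he.symm hs'))
  · exact iff_of_false (fun h => hAB ((hS.symm'.trans' h).trans' hS'))
      (fun h => hab (he.trans (he.symm hs) (he.trans h hs')))
  · exact iff_of_false (fun h => hAB ((hS'.symm'.trans' h.symm').trans' hS))
      (fun h => hab (he.trans (he.symm hs') (he.trans (he.symm h) hs)))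
  · exact iff_of_true (hS.trans' hS'.symm') (he.trans hs (he.symm hs'))
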